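/- Maximum-principle barrier estimate: Let w(x,t) solve the graphical mean curvature flow ∂w/∂t = √(1+|Dw|²) div(Dw/√(1+|Dw|²)) on ℝⁿ × [0, R²], R > 1. If ρ² > 2n+1, then sup_{|x|≤R} |w(x, R²)| ≤ sup_{|x|≤ρR} |w(x,0)| + √(2n+1)·R + 1. -/

import Mathlib

open Real MeasureTheory Metric Filter
open scoped RealInnerProductSpace ENNReal NNReal

noncomputable section

abbrev E (n : ℕ) : Type := EuclideanSpace ℝ (Fin n)

variable {n : ℕ}

/-- `√(1 + |Du|²)`, the area element of the graph of `u`. -/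
def aEl (u : E n → ℝ) (x : E n) : ℝ := Real.sqrt (1 + ‖gradient u x‖ ^ 2)

/-- The vector field `Du/√(1+|Du|²)`. -/
def Vfield (u : E n → ℝ) (x : E n) : E n := (aEl u x)⁻¹ • gradient u x

/-- `div (Du/√(1+|Du|²))`. -/
def divV (u : E n → ℝ) (x : E n) : ℝ :=
  ∑ i, fderiv ℝ (fun y => Vfield u y i) x (EuclideanSpace.single i 1)

/-- The self-shrinker equation for an entire graph. -/
def ShrinkerEq (u : E n → ℝ) : Prop :=
  ∀ x, divV u x = (⟪x, gradient u x⟫ - u x) / (2 * aEl u x)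

/-- The mean curvature of the graph of `u` with respect to the upward unit normal. -/
def meanCurv (u : E n → ℝ) (x : E n) : ℝ := -divV u x

/-- The position vector `X = (x, u x)` of a point of the graph. -/
def Pos (u : E n → ℝ) (x : E n) : E (n + 1) :=
  (WithLp.equiv 2 (Fin (n + 1) → ℝ)).symm (Fin.snoc ((WithLp.equiv 2 (Fin n → ℝ)) x) (u x))

/-- The upward unit normal `n = (-Du, 1)/√(1+|Du|²)` at the point of the graph over `x`. -/
def NmlAt (u : E n → ℝ) (x : E n) : E (n + 1) :=
  (WithLp.equiv 2 (Fin (n + 1) → ℝ)).symm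
    (Fin.snoc (fun i => -(Vfield u x i)) ((aEl u x)⁻¹))

/-- Projection of `ℝ^{n+1}` onto the first `n` coordinates. -/
def projE (p : E (n + 1)) : E n :=
  (WithLp.equiv 2 (Fin n → ℝ)).symm fun i => p i.castSucc

/-- The unit normal of the graph, extended to `ℝ^{n+1}` independently of the last coordinate. -/
def Nml (u : E n → ℝ) (p : E (n + 1)) : E (n + 1) := NmlAt u (projE p)

/-- The inverse induced metric `g^{ij} = δ_{ij} - u_i u_j/(1+|Du|²)` of the graph. -/
def ginv (u : E n → ℝ) (x : E n) (i j : Fin n) : ℝ :=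
  (if i = j then 1 else 0) - gradient u x i * gradient u x j / (aEl u x) ^ 2

/-- The Hessian `u_{ij}` of `u`. -/
def hess (u : E n → ℝ) (x : E n) (i j : Fin n) : ℝ :=
  fderiv ℝ (fun y => gradient u y j) x (EuclideanSpace.single i 1)

/-- `|A|²`, the squared norm of the second fundamental form of the graph of `u`:
`|A|² = g^{ik} g^{jl} h_{ij} h_{kl}` with `h_{ij} = u_{ij}/√(1+|Du|²)`. -/
def A2 (u : E n → ℝ) (x : E n) : ℝ :=
  (∑ i, ∑ j, ∑ k, ∑ l, ginv u x i k * ginv u x j l * hess u x i j * hess u x k l) /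
    (aEl u x) ^ 2

/-- Coordinate components `g^{ij} ∂_j f` of the tangential gradient. -/
def gradCoord (u f : E n → ℝ) (x : E n) (i : Fin n) : ℝ :=
  ∑ j, ginv u x i j * gradient f x j

/-- The tangential gradient `∇_Σ f` (for `f` defined on the base, pulled back to the graph),
as a vector in `ℝ^{n+1}`. -/
def gradSigma (u f : E n → ℝ) (x : E n) : E (n + 1) :=
  (WithLp.equiv 2 (Fin (n + 1) → ℝ)).symm
    (Fin.snoc (fun i => gradCoord u f x i) (∑ i, gradient u x i * gradCoord u f x i))

/-- The Laplace–Beltrami operator of the graph: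
`Δ_Σ f = (1/√g) ∂_i (√g g^{ij} ∂_j f)`. -/
def lapSigma (u f : E n → ℝ) (x : E n) : ℝ :=
  (aEl u x)⁻¹ *
    ∑ i, fderiv ℝ (fun y => aEl u y * gradCoord u f y i) x (EuclideanSpace.single i 1)

/-- The tangential gradient `∇_Σ η` of an ambient function `η : ℝ^{n+1} → ℝ` along the graph:
the ambient gradient minus its normal component. -/
def gradSigmaAmb (u : E n → ℝ) (η : E (n + 1) → ℝ) (x : E n) : E (n + 1) :=
  gradient η (Pos u x) - ⟪gradient η (Pos u x), NmlAt u x⟫ • NmlAt u x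

/-- `Vol(Σ ∩ B_R)`: the area of the part of the graph inside the ball of radius `R`
in `ℝ^{n+1}`, computed by the area formula. -/
def sVol (u : E n → ℝ) (R : ℝ) : ℝ := ∫ x in {x : E n | ‖Pos u x‖ ≤ R}, aEl u x

/-- `M_R = sup_{|x| ≤ R} |u|`. -/
def supBall (u : E n → ℝ) (R : ℝ) : ℝ := ⨆ x : Metric.closedBall (0 : E n) R, |u x.1|

end

section BarrierEstimate

open InnerProductSpace

/-- Second-order necessary condition for a local minimum on the line. -/
lemma IsLocalMin.nonneg_of_hasDerivAt {f f' : ℝ → ℝ} {c : ℝ} {s : ℝ} (hmin : IsLocalMin f s)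
    (hf : ∀ r, HasDerivAt f (f' r) r) (hf' : HasDerivAt f' c s) : 0 ≤ c := by
  by_contra! hc
  have hd : deriv f = f' := funext fun r => (hf r).deriv
  have h0 : deriv f s = 0 := hmin.deriv_eq_zero
  have hdd : deriv (deriv f) s < 0 := by rwa [hd, hf'.deriv]
  have hmax : IsLocalMax f s := isLocalMax_of_deriv_deriv_neg hdd h0 (hf s).continuousAt
  have hconst : f =ᶠ[nhds s] fun _ => f s := by
    filter_upwards [hmin, hmax] with y h₁ h₂ using le_antisymm h₂ h₁
  have : deriv (deriv f) s = 0 := by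
    rw [hconst.deriv.deriv_eq]
    simp
  exact hdd.ne this

/-- At a minimum point over `[0, T]` other than the left endpoint, the derivative is nonpositive. -/
lemma IsMinOn.hasDerivAt_nonpos_of_Icc {f : ℝ → ℝ} {c T t : ℝ} (hmin : IsMinOn f (Set.Icc 0 T) t)
    (ht0 : 0 < t) (htT : t ≤ T) (hf : HasDerivAt f c t) : c ≤ 0 := by
  have hseg : segment ℝ t 0 ⊆ Set.Icc 0 T :=
    (convex_Icc 0 T).segment_subset ⟨ht0.le, htT⟩ ⟨le_rfl, ht0.le.trans htT⟩
  have h := hmin.localize.hasFDerivWithinAt_nonneg hf.hasFDerivAt.hasFDerivWithinAt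
    (sub_mem_posTangentConeAt_of_segment_subset hseg)
  simp only [ContinuousLinearMap.toSpanSingleton_apply, smul_eq_mul] at h
  nlinarith

variable {n : ℕ}

lemma aEl_pos (u : E n → ℝ) (x : E n) : 0 < aEl u x := Real.sqrt_pos.2 (by positivity)

lemma aEl_sq (u : E n → ℝ) (x : E n) : aEl u x ^ 2 = 1 + ‖gradient u x‖ ^ 2 :=
  Real.sq_sqrt (by positivity)

lemma gradient_apply_eq_fderiv (u : E n → ℝ) (x : E n) (i : Fin n) :
    gradient u x i = fderiv ℝ u x (EuclideanSpace.single i 1) := by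
  rw [← toDual_symm_apply (𝕜 := ℝ) (y := fderiv ℝ u x), EuclideanSpace.inner_single_right]
  simp [gradient]

lemma sum_smul_single (p : E n) : ∑ i, p i • EuclideanSpace.single i (1 : ℝ) = p := by
  simpa using (EuclideanSpace.basisFun (Fin n) ℝ).sum_repr p

/-- The non-divergence form `√(1+|Du|²) div (Du/√(1+|Du|²)) = Δu - D²u(Du,Du)/(1+|Du|²)`. -/
lemma aEl_mul_divV {u : E n → ℝ} (hu : ContDiff ℝ 2 u) (x : E n) :
    aEl u x * divV u x =
      ∑ i, fderiv ℝ (fderiv ℝ u) x (EuclideanSpace.single i 1) (EuclideanSpace.single i 1) -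
        fderiv ℝ (fderiv ℝ u) x (gradient u x) (gradient u x) / aEl u x ^ 2 := by
  set D := fderiv ℝ (fderiv ℝ u) x with hDdef
  have hD : HasFDerivAt (fderiv ℝ u) D x :=
    ((hu.fderiv_right (m := 1) le_rfl).differentiable one_ne_zero x).hasFDerivAt
  have hv := aEl_pos u x
  have hc : ∀ i, HasFDerivAt (fun y => gradient u y i) (D.flip (EuclideanSpace.single i 1)) x := by
    intro i
    simp only [gradient_apply_eq_fderiv]
    exact ((ContinuousLinearMap.apply ℝ ℝ (EuclideanSpace.single i 1 : E n)).hasFDerivAt).comp x hD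
  have hN : HasFDerivAt (fun y => 1 + ‖gradient u y‖ ^ 2) (2 • D.flip (gradient u x)) x := by
    simp only [EuclideanSpace.norm_sq_eq, Real.norm_eq_abs, sq_abs]
    refine ((HasFDerivAt.fun_sum fun i (_ : i ∈ Finset.univ) =>
      (hc i).pow 2).const_add 1).congr_fderiv (ContinuousLinearMap.ext fun h => ?_)
    have hsum : ∑ i, gradient u x i * D h (EuclideanSpace.single i 1) = D h (gradient u x) := by
      conv_rhs => rw [← sum_smul_single (gradient u x)]
      simp
    simp [← hsum, Finset.mul_sum, mul_assoc]
  have hS : HasFDerivAt (aEl u) ((1 / (2 * aEl u x)) • 2 • D.flip (gradient u x)) x :=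
    hN.sqrt (by positivity)
  have hI := (hasDerivAt_inv hv.ne').comp_hasFDerivAt x hS
  have hterm : ∀ i : Fin n,
      fderiv ℝ (fun y => Vfield u y i) x (EuclideanSpace.single i 1) =
        (aEl u x)⁻¹ * D (EuclideanSpace.single i 1) (EuclideanSpace.single i 1) -
          (aEl u x)⁻¹ ^ 3 * (gradient u x i * D (EuclideanSpace.single i 1) (gradient u x)) := by
    intro i
    have heq : (fun y => Vfield u y i) = (Inv.inv ∘ aEl u) * fun y => gradient u y i := by
      funext y
      simp [Vfield]
    rw [heq, (hI.mul (hc i)).fderiv]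
    simp
    field_simp
    ring
  simp only [divV, hterm, Finset.sum_sub_distrib, ← Finset.mul_sum]
  have hsum : ∑ i, gradient u x i * D (EuclideanSpace.single i 1) (gradient u x) =
      D (gradient u x) (gradient u x) := by
    conv_rhs => enter [1]; rw [← sum_smul_single (gradient u x)]
    simp
  rw [hsum]
  field_simp

/-- Second-order condition at a local minimum of `(u - a)² + |x|²`. -/
lemma second_variation_nonneg {u : E n → ℝ} (hu : ContDiff ℝ 2 u) {a : ℝ} {x : E n}
    (hmin : IsLocalMin (fun y => (u y - a) ^ 2 + ‖y‖ ^ 2) x) (b : E n) :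
    0 ≤ (u x - a) * fderiv ℝ (fderiv ℝ u) x b b + ⟪gradient u x, b⟫ ^ 2 + ‖b‖ ^ 2 := by
  set D := fderiv ℝ (fderiv ℝ u) x with hDdef
  have hl : ∀ s : ℝ, HasDerivAt (fun s : ℝ => x + s • b) b s := fun s => by
    simpa using ((hasDerivAt_id s).smul_const b).const_add x
  have hu1 : ∀ s : ℝ, HasDerivAt (fun s : ℝ => u (x + s • b)) (fderiv ℝ u (x + s • b) b) s :=
    fun s => ((hu.differentiable two_ne_zero _).hasFDerivAt).comp_hasDerivAt s (hl s)
  have h1 : ∀ s : ℝ, HasDerivAt (fun s : ℝ => (u (x + s • b) - a) ^ 2 + ‖x + s • b‖ ^ 2)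
      (2 * (u (x + s • b) - a) * fderiv ℝ u (x + s • b) b + 2 * ⟪x + s • b, b⟫) s := by
    intro s
    refine ((((hu1 s).sub_const a).pow 2).add (hl s).norm_sq).congr_deriv ?_
    simp
  have hD : HasFDerivAt (fderiv ℝ u) D (x + (0 : ℝ) • b) := by
    rw [zero_smul, add_zero]
    exact ((hu.fderiv_right (m := 1) le_rfl).differentiable one_ne_zero x).hasFDerivAt
  have hd2 : HasDerivAt (fun s : ℝ => fderiv ℝ u (x + s • b) b) (D b b) 0 :=
    ((ContinuousLinearMap.apply ℝ ℝ b).hasFDerivAt).comp_hasDerivAt 0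
      (hD.comp_hasDerivAt 0 (hl 0))
  have hd3 : HasDerivAt (fun s : ℝ => ⟪x + s • b, b⟫) (‖b‖ ^ 2) 0 := by
    refine ((hl 0).inner ℝ (hasDerivAt_const 0 b)).congr_deriv ?_
    simp
  have h2 := ((((hu1 0).sub_const a).const_mul 2).mul hd2).add (hd3.const_mul 2)
  have hm : IsLocalMin (fun s : ℝ => (u (x + s • b) - a) ^ 2 + ‖x + s • b‖ ^ 2) 0 := by
    have hc : Tendsto (fun s : ℝ => x + s • b) (nhds 0) (nhds x) := by
      simpa using (hl 0).continuousAt.tendsto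
    filter_upwards [hc.eventually hmin] with s hs
    simpa using hs
  have h3 := hm.nonneg_of_hasDerivAt h1 h2
  have hpb : fderiv ℝ u x b = ⟪gradient u x, b⟫ := by
    rw [gradient, toDual_symm_apply]
  simp only [zero_smul, add_zero, hpb] at h3
  linarith

/-- At a spatial minimum of `(u - a)² + |x|²`, the squared distance of the graph of `u` to a point
on the vertical axis, the sphere comparison inequality holds. -/
lemma nonneg_of_isLocalMin_sq_dist {u : E n → ℝ} (hu : ContDiff ℝ 2 u) {a : ℝ} {x : E n}
    (hmin : IsLocalMin (fun y => (u y - a) ^ 2 + ‖y‖ ^ 2) x) :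
    0 ≤ (u x - a) * (aEl u x * divV u x) + n := by
  set D := fderiv ℝ (fderiv ℝ u) x with hDdef
  set p := gradient u x with hp
  set v := aEl u x with hvdef
  have hv : 0 < v := aEl_pos u x
  have hv2 : v ^ 2 = 1 + ‖p‖ ^ 2 := aEl_sq u x
  have hline : ∀ b : E n, 0 ≤ (u x - a) * D b b + ⟪p, b⟫ ^ 2 + ‖b‖ ^ 2 :=
    second_variation_nonneg hu hmin
  set c : ℝ := (v * (v + 1))⁻¹ with hc
  have hcp : c * ‖p‖ ^ 2 = 1 - v⁻¹ := by
    rw [show ‖p‖ ^ 2 = v ^ 2 - 1 by linarith, hc]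
    field_simp
    ring
  have hcv : c * (1 + v⁻¹) = (v ^ 2)⁻¹ := by
    rw [hc]
    field_simp
  have hpi : ∑ i, p i ^ 2 = ‖p‖ ^ 2 := by
    simp [EuclideanSpace.norm_sq_eq]
  have hterm : ∀ i : Fin n, 0 ≤
      (u x - a) * (D (EuclideanSpace.single i 1) (EuclideanSpace.single i 1)
        - c * (p i * D (EuclideanSpace.single i 1) p) - c * (p i * D p (EuclideanSpace.single i 1))
        + c ^ 2 * D p p * p i ^ 2) + v⁻¹ ^ 2 * p i ^ 2 + (1 - (v ^ 2)⁻¹ * p i ^ 2) := by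
    intro i
    have h := hline (EuclideanSpace.single i 1 - (c * p i) • p)
    have e1 : ⟪p, EuclideanSpace.single i 1 - (c * p i) • p⟫ = v⁻¹ * p i := by
      rw [inner_sub_right, inner_smul_right, real_inner_self_eq_norm_sq,
        EuclideanSpace.inner_single_right]
      simp only [one_mul, conj_trivial]
      linear_combination - p i * hcp
    have e2 : ‖EuclideanSpace.single i 1 - (c * p i) • p‖ ^ 2 = 1 - (v ^ 2)⁻¹ * p i ^ 2 := by
      rw [norm_sub_sq_real, inner_smul_right, EuclideanSpace.inner_single_left, norm_smul, mul_pow]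
      simp only [PiLp.norm_single, norm_one, one_pow, map_one, one_mul, Real.norm_eq_abs,
        sq_abs]
      linear_combination c * p i ^ 2 * hcp - p i ^ 2 * hcv
    rw [e1, e2] at h
    convert h using 2
    simp only [map_sub, map_smul, sub_apply, smul_apply,
      smul_eq_mul]
    ring
  have hs := Finset.sum_nonneg fun i (_ : i ∈ Finset.univ) => hterm i
  simp only [Finset.sum_add_distrib, Finset.sum_sub_distrib, ← Finset.mul_sum, hpi] at hs
  have hs1 : ∑ i, p i * D (EuclideanSpace.single i 1) p = D p p := by
    conv_rhs => enter [1]; rw [← sum_smul_single p]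
    simp
  have hs2 : ∑ i, p i * D p (EuclideanSpace.single i 1) = D p p := by
    conv_rhs => enter [2]; rw [← sum_smul_single p]
    simp
  rw [hs1, hs2] at hs
  rw [aEl_mul_divV hu]
  simp only [← hDdef, ← hp, ← hvdef, div_eq_mul_inv, ← hcv]
  simp only [Finset.sum_const, Finset.card_univ, Fintype.card_fin, nsmul_eq_mul, mul_one] at hs
  rw [inv_pow v] at hs
  refine hs.trans_eq ?_
  linear_combination ((u x - a) * D p p * c) * hcp

/-- Avoidance principle for a graphical mean curvature flow and a shrinking sphere of initial
radius `r` centred at `(0, a)`: if the graph is initially outside the sphere, it stays outside. -/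
lemma sphere_avoidance {w : E n → ℝ → ℝ} {T r a : ℝ}
    (hw : ContDiff ℝ 2 fun p : E n × ℝ => w p.1 p.2) (hr : 0 ≤ r)
    (hflow : ∀ x : E n, ∀ t ∈ Set.Icc (0 : ℝ) T,
      deriv (w x) t = aEl (fun y => w y t) x * divV (fun y => w y t) x)
    (h0 : ∀ x : E n, ‖x‖ ≤ r → r ^ 2 ≤ (w x 0 - a) ^ 2)
    (x : E n) {t : ℝ} (ht : t ∈ Set.Icc 0 T) :
    r ^ 2 ≤ (w x t - a) ^ 2 + ‖x‖ ^ 2 + 2 * n * t := by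
  have hT : 0 ≤ T := ht.1.trans ht.2
  refine le_of_forall_pos_le_add fun δ hδ => ?_
  obtain ⟨ε, hε, hεδ⟩ : ∃ ε : ℝ, 0 < ε ∧ ε * t ≤ δ := by
    refine ⟨δ / (t + 1), div_pos hδ (by linarith [ht.1]), ?_⟩
    rw [div_mul_eq_mul_div, div_le_iff₀ (by linarith [ht.1])]
    nlinarith
  refine le_trans ?_ (add_le_add_right hεδ _)
  set F : E n × ℝ → ℝ := fun q =>
    (w q.1 q.2 - a) ^ 2 + ‖q.1‖ ^ 2 + 2 * n * q.2 + ε * q.2 with hF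
  have hFc : Continuous F := by
    have := hw.continuous
    fun_prop
  by_contra! hlt
  change F (x, t) < r ^ 2 at hlt
  have hin : ∀ y s, 0 ≤ s → F (y, s) < r ^ 2 → ‖y‖ < r := by
    intro y s hs h
    refine lt_of_pow_lt_pow_left₀ 2 hr ?_
    have : 0 ≤ 2 * (n : ℝ) * s := by positivity
    have : 0 ≤ ε * s := by positivity
    simp only [hF] at h
    nlinarith [sq_nonneg (w y s - a)]
  have hK : IsCompact (closedBall (0 : E n) r ×ˢ Set.Icc (0 : ℝ) T) :=
    (isCompact_closedBall _ _).prod isCompact_Icc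
  have hxK : (x, t) ∈ closedBall (0 : E n) r ×ˢ Set.Icc (0 : ℝ) T :=
    ⟨by simpa using (hin x t ht.1 hlt).le, ht⟩
  obtain ⟨⟨y, s⟩, ⟨-, hs⟩, hmin⟩ := hK.exists_isMinOn ⟨_, hxK⟩ hFc.continuousOn
  have hlt' : F (y, s) < r ^ 2 := (hmin hxK).trans_lt hlt
  have hy : ‖y‖ < r := hin y s hs.1 hlt'
  have hs0 : 0 < s := by
    refine lt_of_le_of_ne hs.1 fun h => ?_
    subst h
    have := h0 y hy.le
    simp only [hF] at hlt'
    nlinarith [sq_nonneg ‖y‖]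
  have hspace : IsLocalMin (fun z => (w z s - a) ^ 2 + ‖z‖ ^ 2) y := by
    filter_upwards [isOpen_ball.mem_nhds (mem_ball_zero_iff.2 hy)] with z hz
    have : F (y, s) ≤ F (z, s) := hmin ⟨ball_subset_closedBall hz, hs⟩
    simp only [hF] at this
    linarith
  have htime : IsMinOn (fun τ => F (y, τ)) (Set.Icc 0 T) s := fun τ hτ =>
    hmin ⟨by simpa using hy.le, hτ⟩
  have hwt : HasDerivAt (w y) (deriv (w y) s) s :=
    ((hw.comp (contDiff_prodMk_right y)).differentiable two_ne_zero s).hasDerivAt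
  have hFt : HasDerivAt (fun τ => F (y, τ))
      (2 * (w y s - a) * deriv (w y) s + 2 * n + ε) s := by
    refine (((((hwt.sub_const a).pow 2).add_const (‖y‖ ^ 2)).add
      ((hasDerivAt_id s).const_mul (2 * (n : ℝ)))).add
      ((hasDerivAt_id s).const_mul ε)).congr_deriv ?_
    simp
  have hle := htime.hasDerivAt_nonpos_of_Icc hs0 hs.2 hFt
  have hge := nonneg_of_isLocalMin_sq_dist (hw.comp (contDiff_prodMk_left s)) hspace
  rw [hflow y s hs] at hle
  have hge' : 0 ≤ (w y s - a) * (aEl (fun z => w z s) y * divV (fun z => w z s) y) + n := hge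
  linarith

lemma abs_le_supBall {u : E n → ℝ} (hu : Continuous u) {r : ℝ} {x : E n} (hx : ‖x‖ ≤ r) :
    |u x| ≤ supBall u r := by
  have hb : BddAbove (Set.range fun y : closedBall (0 : E n) r => |u y.1|) := by
    rw [show (Set.range fun y : closedBall (0 : E n) r => |u y.1|)
      = (fun y => |u y|) '' closedBall 0 r by ext; simp]
    exact ((isCompact_closedBall _ _).image (by fun_prop)).bddAbove
  exact le_ciSup hb ⟨x, by simpa using hx⟩

/-- A continuous function on `[0, T]` that never vanishes keeps its sign. -/
lemma neg_of_ne_zero_of_neg {f : ℝ → ℝ} (hf : Continuous f) {T : ℝ} (hT : 0 ≤ T)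
    (hne : ∀ t ∈ Set.Icc 0 T, f t ≠ 0) (h0 : f 0 < 0) : f T < 0 := by
  by_contra! h
  obtain ⟨t, ht, hft⟩ := intermediate_value_Icc hT hf.continuousOn ⟨h0.le, h⟩
  exact hne t ht hft

end BarrierEstimate

/-- maximum-principle barrier estimate for graphical mean curvature
flow: if `w` solves the flow on `ℝⁿ × [0, R²]` with `R > 1` and `ρ² > 2n+1`, then
`sup_{|x|≤R} |w(x,R²)| ≤ sup_{|x|≤ρR} |w(x,0)| + √(2n+1)·R + 1`. -/
theorem stmt_17 (n : ℕ) (w : E n → ℝ → ℝ) (R ρ : ℝ) (hR : 1 < R)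
    (hρ0 : 0 < ρ) (hρ : 2 * n + 1 < ρ ^ 2)
    (hw : ContDiff ℝ (⊤ : ℕ∞) fun p : E n × ℝ => w p.1 p.2)
    (hflow : ∀ x : E n, ∀ t ∈ Set.Icc (0 : ℝ) (R ^ 2),
      deriv (w x) t = aEl (fun y => w y t) x * divV (fun y => w y t) x) :
    ∀ x : E n, ‖x‖ ≤ R →
      |w x (R ^ 2)| ≤ supBall (fun y => w y 0) (ρ * R) +
        Real.sqrt (2 * n + 1) * R + 1 := by
  intro x hx
  have hw2 : ContDiff ℝ 2 fun p : E n × ℝ => w p.1 p.2 := hw.of_le (WithTop.coe_le_coe.2 le_top)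
  have hc0 : Continuous fun y => w y 0 := hw.continuous.comp (Continuous.prodMk_left 0)
  have hcx : Continuous (w x) := hw.continuous.comp (Continuous.prodMk_right x)
  have hR0 : 0 < R := by linarith
  have hn : (0 : ℝ) ≤ n := n.cast_nonneg
  have hρ1 : 1 < ρ := by nlinarith
  have hr : 0 < ρ * R := by positivity
  have hxr : ‖x‖ ≤ ρ * R := by nlinarith
  set M := supBall (fun y => w y 0) (ρ * R) with hM
  have hbound : ∀ y : E n, ‖y‖ ≤ ρ * R → |w y 0| ≤ M := fun y hy => abs_le_supBall hc0 hy
  have hκ : 0 < ρ ^ 2 - (2 * n + 1) := by linarith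
  have havoid : ∀ a : ℝ, (∀ y : E n, ‖y‖ ≤ ρ * R → ρ * R ≤ |w y 0 - a|) →
      ∀ t ∈ Set.Icc 0 (R ^ 2), (ρ ^ 2 - (2 * n + 1)) * R ^ 2 ≤ (w x t - a) ^ 2 := by
    intro a ha t ht
    have h := sphere_avoidance (a := a) hw2 hr.le hflow
      (fun y hy => by rw [← sq_abs (w y 0 - a)]; exact pow_le_pow_left₀ hr.le (ha y hy) 2) x ht
    have hx2 : ‖x‖ ^ 2 ≤ R ^ 2 := pow_le_pow_left₀ (norm_nonneg x) hx 2
    have ht2 : 2 * n * t ≤ 2 * n * R ^ 2 := mul_le_mul_of_nonneg_left ht.2 (by positivity)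
    linarith
  have hsqrt : ρ ≤ √(2 * n + 1) + √(ρ ^ 2 - (2 * n + 1)) := by
    refine le_of_sq_le_sq ?_ (by positivity)
    have h1 := Real.sq_sqrt (show (0 : ℝ) ≤ 2 * n + 1 by positivity)
    have h2 := Real.sq_sqrt hκ.le
    have h3 : 0 ≤ √(2 * n + 1) * √(ρ ^ 2 - (2 * n + 1)) := by positivity
    nlinarith
  have hroot : ∀ z : ℝ, (ρ ^ 2 - (2 * n + 1)) * R ^ 2 ≤ z ^ 2 →
      (ρ - √(2 * n + 1)) * R ≤ |z| := by
    intro z hz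
    have h := Real.sqrt_le_sqrt hz
    rw [Real.sqrt_mul hκ.le, Real.sqrt_sq hR0.le, Real.sqrt_sq_eq_abs] at h
    nlinarith
  have hpos : 0 < (ρ ^ 2 - (2 * n + 1)) * R ^ 2 := by positivity
  have hTmem : R ^ 2 ∈ Set.Icc 0 (R ^ 2) := ⟨by positivity, le_rfl⟩
  have hx0 := abs_le.1 (hbound x hxr)
  have hupper := havoid (M + ρ * R) fun y hy => by
    have := abs_le.1 (hbound y hy)
    exact le_abs.2 (Or.inr (by linarith))
  have hlower := havoid (-(M + ρ * R)) fun y hy => by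
    have := abs_le.1 (hbound y hy)
    exact le_abs.2 (Or.inl (by linarith))
  have hupper_sign : w x (R ^ 2) - (M + ρ * R) < 0 :=
    neg_of_ne_zero_of_neg (f := fun t => w x t - (M + ρ * R)) (by fun_prop) (by positivity)
      (fun t ht h => by have := hupper t ht; simp only [h] at this; linarith) (by linarith)
  have hlower_sign : -(w x (R ^ 2) - -(M + ρ * R)) < 0 :=
    neg_of_ne_zero_of_neg (f := fun t => -(w x t - -(M + ρ * R))) (by fun_prop) (by positivity)
      (fun t ht h => by
        have := hlower t ht
        rw [neg_eq_zero.1 h] at this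
        linarith) (by linarith)
  have hu := hroot _ (hupper _ hTmem)
  have hl := hroot _ (hlower _ hTmem)
  rw [abs_of_neg hupper_sign] at hu
  rw [abs_of_pos (neg_lt_zero.1 hlower_sign)] at hl
  exact abs_le.2 ⟨by linarith, by linarith⟩
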